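/- Let a and b be nonzero, multiplicatively independent integers. For real x ≥ 16 set ξ = log log x, and let U(x) be the set of primes p ≤ x such that p divides ab, or p ≤ ξ, or the ξ-smooth part of p−1 exceeds exp(√(log p)), or the ξ-rough part of p−1 is not squarefree, or ℓ_a(p) ≤ p^{1/2}/log p, or ℓ_b(p) ≤ p^{1/2}/log p, or ℓ_{a,b}(p) ≤ p^{2/3}/log p. Then there exist a constant C > 0 and x_0 (depending on a, b) such that for all x ≥ x_0 and all t with 2 ≤ t ≤ x, the number of primes in U(x) that are at most t is at most C·( log x/log log x + t/(log t)^{3/2} + t/(log t · log log x) ). -/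

import Mathlib

open scoped Classical


/-- The `z`-smooth part of `m`: its largest `z`-smooth divisor. -/
noncomputable def smoothPart (z : ℝ) (m : ℕ) : ℕ :=
  ∏ p ∈ m.primeFactors.filter (fun p : ℕ => (p : ℝ) ≤ z), p ^ m.factorization p

/-- The `z`-rough part of `m`: the cofactor of the `z`-smooth part. -/
noncomputable def roughPart (z : ℝ) (m : ℕ) : ℕ :=
  ∏ p ∈ m.primeFactors.filter (fun p : ℕ => z < (p : ℝ)), p ^ m.factorization p

/-- The order of the subgroup of `(ℤ/pℤ)ˣ` generated by the residues of `a` and `b`. -/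
noncomputable def ellPair (a b : ℤ) (p : ℕ) : ℕ :=
  Nat.card (Submonoid.closure ({(a : ZMod p), (b : ZMod p)} : Set (ZMod p)))

/-- Membership in the exceptional set `U(x)`: with `ξ = log log x`, the prime `p`
divides `ab`, or `p ≤ ξ`, or the `ξ`-smooth part of `p - 1` exceeds `exp(√(log p))`,
or the `ξ`-rough part of `p - 1` is not squarefree, or `ℓ_a(p) ≤ p^(1/2)/log p`, or
`ℓ_b(p) ≤ p^(1/2)/log p`, or `ℓ_{a,b}(p) ≤ p^(2/3)/log p`. -/
def UCond (a b : ℤ) (x : ℝ) (p : ℕ) : Prop :=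
  (p : ℤ) ∣ a * b ∨ (p : ℝ) ≤ Real.log (Real.log x) ∨
  Real.exp (Real.sqrt (Real.log p)) < (smoothPart (Real.log (Real.log x)) (p - 1) : ℝ) ∨
  ¬ Squarefree (roughPart (Real.log (Real.log x)) (p - 1)) ∨
  (orderOf ((a : ZMod p)) : ℝ) ≤ (p : ℝ) ^ ((1 : ℝ) / 2) / Real.log p ∨
  (orderOf ((b : ZMod p)) : ℝ) ≤ (p : ℝ) ^ ((1 : ℝ) / 2) / Real.log p ∨
  (ellPair a b p : ℝ) ≤ (p : ℝ) ^ ((2 : ℝ) / 3) / Real.log p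


lemma aux_ordCompl_dvd (q M : ℕ) (hq : q.Prime) :
    (M.factorial / q ^ M.factorial.factorization q) ∣ ∏ i ∈ Finset.range M, (1 + q ^ 2 * (i + 1)) := by
  set N := M.factorial / q ^ M.factorial.factorization q with hN
  have hNpos : 0 < N := Nat.ordCompl_pos q (Nat.factorial_ne_zero M)
  have : NeZero N := ⟨hNpos.ne'⟩
  have hcop : Nat.Coprime (q ^ 2) N :=
    Nat.Coprime.pow_left 2 (Nat.coprime_ordCompl hq (Nat.factorial_ne_zero M))
  set w : ℕ := (((q ^ 2 : ℕ) : ZMod N)⁻¹).val with hw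
  have hw1 : (w : ZMod N) * ((q ^ 2 : ℕ) : ZMod N) = 1 := by
    rw [hw, ZMod.natCast_zmod_val, mul_comm]
    exact ZMod.coe_mul_inv_eq_one _ hcop
  have hasc : ((∏ i ∈ Finset.range M, (w + 1 + i) : ℕ) : ZMod N) = 0 := by
    rw [ZMod.natCast_eq_zero_iff, ← Nat.ascFactorial_eq_prod_range]
    exact (Nat.ordCompl_dvd _ _).trans (Nat.factorial_dvd_ascFactorial _ _)
  have key : (w : ZMod N) ^ M * ((∏ i ∈ Finset.range M, (1 + q ^ 2 * (i + 1)) : ℕ) : ZMod N) = 0 := by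
    rw [← hasc]
    push_cast
    have : (w : ZMod N) ^ M = ∏ i ∈ Finset.range M, (w : ZMod N) := by simp
    rw [this, ← Finset.prod_mul_distrib]
    refine Finset.prod_congr rfl fun i _ => ?_
    push_cast at hw1
    linear_combination (i + 1 : ZMod N) * hw1
  rw [← ZMod.natCast_eq_zero_iff]
  have hu : IsUnit ((w : ZMod N) ^ M) := (IsUnit.of_mul_eq_one _ hw1).pow M
  exact (hu.mul_right_eq_zero).1 key

lemma aux_prod_le (q M : ℕ) (hq : q.Prime) (S : Finset ℕ)
    (hS : ∀ p ∈ S, p.Prime ∧ M < p ∧ ∃ m, m ≤ M ∧ p = 1 + q ^ 2 * m) :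
    ∏ p ∈ S, p ≤ q ^ (4 * M) := by
  set P := ∏ i ∈ Finset.range M, (1 + q ^ 2 * (i + 1)) with hP
  set v := M.factorial.factorization q with hv
  have hN := aux_ordCompl_dvd q M hq
  rw [← hP, ← hv] at hN
  have hq2 := hq.two_le
  have hD : ∏ p ∈ S, p ∣ P := by
    refine Finset.prod_primes_dvd _ (fun p hp => (hS p hp).1.prime) fun p hp => ?_
    obtain ⟨hpp, _, m, hm, rfl⟩ := hS p hp
    rcases m with _ | m
    · simp at hpp
      exact absurd hpp Nat.not_prime_one
    · exact Finset.dvd_prod_of_mem (fun i => 1 + q ^ 2 * (i + 1)) (Finset.mem_range.2 hm)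
  have hcop : Nat.Coprime (∏ p ∈ S, p) (M.factorial / q ^ v) := by
    refine Nat.Coprime.prod_left fun p hp => ?_
    refine Nat.Coprime.coprime_dvd_right (Nat.ordCompl_dvd _ _) ?_
    exact (hS p hp).1.coprime_factorial_of_lt (hS p hp).2.1
  have hPpos : 0 < P := Finset.prod_pos fun i _ => by positivity
  have h1 : (∏ p ∈ S, p) * (M.factorial / q ^ v) ≤ P :=
    Nat.le_of_dvd hPpos (hcop.mul_dvd_of_dvd_of_dvd hD hN)
  have h2 : q ^ v * (M.factorial / q ^ v) = M.factorial := Nat.ordProj_mul_ordCompl_eq_self _ _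
  have hvM : v ≤ M := by
    have : Fact q.Prime := ⟨hq⟩
    have := sub_one_mul_padicValNat_factorial (p := q) M
    rw [← Nat.factorization_def _ hq, ← hv] at this
    calc v = 1 * v := (one_mul v).symm
      _ ≤ (q - 1) * v := Nat.mul_le_mul_right _ (by omega)
      _ ≤ M := by omega
  have hPle : P ≤ (q ^ 3) ^ M * M.factorial := by
    rw [← Finset.prod_range_add_one_eq_factorial]
    have : (q ^ 3) ^ M = ∏ i ∈ Finset.range M, q ^ 3 := by simp
    rw [this, ← Finset.prod_mul_distrib]
    refine Finset.prod_le_prod (fun _ _ => Nat.zero_le _) fun i _ => ?_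
    have : q ^ 2 + 1 ≤ q ^ 3 := by nlinarith
    nlinarith
  have hfin : (∏ p ∈ S, p) * M.factorial ≤ q ^ (4 * M) * M.factorial := by
    calc (∏ p ∈ S, p) * M.factorial = q ^ v * ((∏ p ∈ S, p) * (M.factorial / q ^ v)) := by
          rw [← h2]; rw [Nat.mul_div_cancel_left _ (pow_pos hq.pos v)]; ring
      _ ≤ q ^ M * ((q ^ 3) ^ M * M.factorial) :=
          Nat.mul_le_mul (Nat.pow_le_pow_right hq.pos hvM) (h1.trans hPle)
      _ = q ^ (4 * M) * M.factorial := by rw [← mul_assoc]; congr 1; ring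
  exact Nat.le_of_mul_le_mul_right hfin (Nat.factorial_pos M)

lemma aux_card_log (t : ℝ) (ht : 2 ≤ t) (S : Finset ℕ) (hS : ∀ p ∈ S, √t < (p : ℝ)) (B : ℕ)
    (hB : ∏ p ∈ S, p ≤ B) : (S.card : ℝ) * Real.log t ≤ 2 * Real.log B := by
  have hst : 0 < √t := Real.sqrt_pos.2 (by linarith)
  have h1 : (√t) ^ S.card ≤ (B : ℝ) := by
    calc (√t) ^ S.card = ∏ p ∈ S, √t := by simp
      _ ≤ ∏ p ∈ S, (p : ℝ) := Finset.prod_le_prod (fun _ _ => hst.le) fun p hp => (hS p hp).le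
      _ = ((∏ p ∈ S, p : ℕ) : ℝ) := by push_cast; rfl
      _ ≤ B := Nat.cast_le.2 hB
  have h2 := Real.log_le_log (pow_pos hst _) h1
  rw [Real.log_pow, Real.log_sqrt (by linarith)] at h2
  linarith

lemma aux_ap (t : ℝ) (ht : 2 ≤ t) (q : ℕ) (hq : q.Prime) (S : Finset ℕ)
    (hS : ∀ p ∈ S, p.Prime ∧ √t < (p : ℝ) ∧ (p : ℝ) ≤ t ∧ q ^ 2 ∣ p - 1) :
    (S.card : ℝ) ≤ 12 * (t / Real.log t) * (Real.log q / (q : ℝ) ^ 2) := by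
  have hL : 0 < Real.log t := Real.log_pos (by linarith)
  set M := ⌊t⌋₊ / q ^ 2 with hM
  have hMt : (M : ℝ) ≤ t / (q : ℝ) ^ 2 := by
    calc (M : ℝ) ≤ (⌊t⌋₊ : ℝ) / ((q ^ 2 : ℕ) : ℝ) := Nat.cast_div_le
      _ ≤ t / (q : ℝ) ^ 2 := by
        push_cast
        gcongr
        exact Nat.floor_le (by linarith)
  have hlogq : Real.log 2 ≤ Real.log q := Real.log_le_log (by norm_num) (by exact_mod_cast hq.two_le)
  have hlog2 : 0 < Real.log 2 := Real.log_pos (by norm_num)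
  have hA : ((S.filter (fun p => M < p)).card : ℝ) * Real.log t ≤ 2 * (4 * M * Real.log q) := by
    have := aux_card_log t ht (S.filter (fun p => M < p))
      (fun p hp => (hS p (Finset.mem_filter.1 hp).1).2.1) (q ^ (4 * M))
      (aux_prod_le q M hq _ fun p hp => by
        obtain ⟨hp, hpM⟩ := Finset.mem_filter.1 hp
        obtain ⟨hpp, _, hpt, hd⟩ := hS p hp
        obtain ⟨m, hm⟩ := hd
        refine ⟨hpp, hpM, m, ?_, by have := hpp.one_lt; omega⟩
        rw [hM, Nat.le_div_iff_mul_le (pow_pos hq.pos 2), mul_comm, ← hm]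
        exact (Nat.sub_le _ _).trans (Nat.le_floor hpt))
    push_cast at this
    rw [Real.log_pow] at this
    push_cast at this
    exact this
  have hB : ((S.filter (fun p => ¬ M < p)).card : ℝ) * Real.log t ≤ 2 * (2 * M * Real.log q) := by
    have := aux_card_log t ht (S.filter (fun p => ¬ M < p))
      (fun p hp => (hS p (Finset.mem_filter.1 hp).1).2.1) (4 ^ M) (by
        refine le_trans ?_ (primorial_le_four_pow M)
        unfold primorial
        refine Finset.prod_le_prod_of_subset_of_one_le' ?_ ?_
        · intro p hp
          obtain ⟨hp, hpM⟩ := Finset.mem_filter.1 hp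
          exact Finset.mem_filter.2 ⟨Finset.mem_range.2 (by omega), (hS p hp).1⟩
        · intro p hp _
          exact (Finset.mem_filter.1 hp).2.one_lt.le)
    push_cast at this
    rw [Real.log_pow, show (4 : ℝ) = 2 ^ 2 by norm_num, Real.log_pow] at this
    push_cast at this
    have h3 : (M : ℝ) * Real.log 2 ≤ M * Real.log q := by gcongr
    linarith
  have hcard := S.card_filter_add_card_filter_not (fun p => M < p)
  have hcard' : ((S.filter (fun p => M < p)).card : ℝ) + ((S.filter (fun p => ¬ M < p)).card : ℝ)
      = S.card := by exact_mod_cast hcard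
  have h4 : (S.card : ℝ) * Real.log t ≤ 12 * (t / (q : ℝ) ^ 2) * Real.log q := by
    have : (M : ℝ) * Real.log q ≤ (t / (q : ℝ) ^ 2) * Real.log q := by
      apply mul_le_mul_of_nonneg_right hMt; linarith
    rw [← hcard']
    nlinarith
  rw [← le_div_iff₀ hL] at h4
  refine h4.trans (le_of_eq ?_)
  ring

lemma aux_sum_dyadic (j : ℕ) : ∀ n : ℕ, 1 ≤ n →
    ∑ q ∈ (Finset.Ioc n (2 ^ j * n)).filter Nat.Prime, Real.log q / (q : ℝ) ^ 2
      ≤ 4 * Real.log 4 / n := by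
  induction j with
  | zero => intro n hn; simp; positivity
  | succ j ih =>
    intro n hn
    have hn0 : (0 : ℝ) < n := by exact_mod_cast hn
    have h2 := ih (2 * n) (by omega)
    have hsub : (Finset.Ioc n (2 ^ (j + 1) * n)).filter Nat.Prime ⊆
        (Finset.Ioc n (2 * n)).filter Nat.Prime ∪
        (Finset.Ioc (2 * n) (2 ^ j * (2 * n))).filter Nat.Prime := by
      intro q hq
      simp only [Finset.mem_union, Finset.mem_filter, Finset.mem_Ioc] at hq ⊢
      have : 2 ^ (j + 1) * n = 2 ^ j * (2 * n) := by ring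
      rw [this] at hq
      rcases le_or_gt q (2 * n) with h | h
      · exact Or.inl ⟨⟨hq.1.1, h⟩, hq.2⟩
      · exact Or.inr ⟨⟨h, hq.1.2⟩, hq.2⟩
    have hnn : ∀ q : ℕ, 0 ≤ Real.log q / (q : ℝ) ^ 2 := fun q =>
      div_nonneg (Real.log_natCast_nonneg q) (by positivity)
    have h1 : ∑ q ∈ (Finset.Ioc n (2 * n)).filter Nat.Prime, Real.log q / (q : ℝ) ^ 2
        ≤ 2 * Real.log 4 / n := by
      calc _ ≤ ∑ q ∈ (Finset.Ioc n (2 * n)).filter Nat.Prime, Real.log q / (n : ℝ) ^ 2 := by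
            refine Finset.sum_le_sum fun q hq => ?_
            have hq1 := (Finset.mem_Ioc.1 (Finset.mem_filter.1 hq).1).1
            have : (n : ℝ) ≤ q := by exact_mod_cast hq1.le
            have := Real.log_natCast_nonneg q
            gcongr
        _ = (∑ q ∈ (Finset.Ioc n (2 * n)).filter Nat.Prime, Real.log q) / (n : ℝ) ^ 2 := by
            rw [Finset.sum_div]
        _ ≤ (Real.log 4 * ((2 * n : ℕ) : ℝ)) / (n : ℝ) ^ 2 := by
            gcongr
            refine le_trans ?_ (Chebyshev.theta_le_log4_mul_x (Nat.cast_nonneg _))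
            unfold Chebyshev.theta
            rw [Nat.floor_natCast]
            refine Finset.sum_le_sum_of_subset_of_nonneg ?_ fun q _ _ => Real.log_natCast_nonneg q
            intro q hq
            simp only [Finset.mem_filter, Finset.mem_Ioc] at hq ⊢
            exact ⟨⟨by omega, hq.1.2⟩, hq.2⟩
        _ = 2 * Real.log 4 / n := by push_cast; field_simp
    calc _ ≤ ∑ q ∈ (Finset.Ioc n (2 * n)).filter Nat.Prime ∪
        (Finset.Ioc (2 * n) (2 ^ j * (2 * n))).filter Nat.Prime, Real.log q / (q : ℝ) ^ 2 :=
          Finset.sum_le_sum_of_subset_of_nonneg hsub fun q _ _ => hnn q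
      _ ≤ 2 * Real.log 4 / n + 4 * Real.log 4 / ((2 * n : ℕ) : ℝ) := by
          rw [Finset.sum_union]
          swap
          · refine Finset.disjoint_filter_filter (Finset.disjoint_left.2 fun q h h' => ?_)
            simp only [Finset.mem_Ioc] at h h'
            omega
          · exact add_le_add h1 h2
      _ = 4 * Real.log 4 / n := by push_cast; field_simp; norm_num

lemma aux_rough (z : ℝ) (m : ℕ) (h : ¬ Squarefree (roughPart z m)) :
    ∃ q : ℕ, q.Prime ∧ z < q ∧ q ^ 2 ∣ m := by
  have hdvd : m ≠ 0 → roughPart z m ∣ m := by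
    intro hm
    conv_rhs => rw [← Nat.prod_factorization_pow_eq_self hm]
    exact Finset.prod_dvd_prod_of_subset _ _ _ (Finset.filter_subset _ _)
  have hm : m ≠ 0 := by
    rintro rfl
    simp [roughPart] at h
  rw [Nat.squarefree_iff_prime_squarefree] at h
  push Not at h
  obtain ⟨q, hq, hqq⟩ := h
  refine ⟨q, hq, ?_, by rw [pow_two]; exact hqq.trans (hdvd hm)⟩
  have h1 : q ∣ roughPart z m := (dvd_mul_right q q).trans hqq
  obtain ⟨r, hr, hqr⟩ := (hq.prime.dvd_finsetProd_iff _).1 h1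
  obtain ⟨hr, hzr⟩ := Finset.mem_filter.1 hr
  have := (Nat.prime_dvd_prime_iff_eq hq (Nat.prime_of_mem_primeFactors hr)).1 (hq.dvd_of_dvd_pow hqr)
  rw [this]; exact hzr

lemma L4 : ∃ C : ℝ, 0 < C ∧ ∀ t ξ : ℝ, 2 ≤ t → 1 ≤ ξ → ∀ S : Finset ℕ,
    (∀ p ∈ S, p.Prime ∧ √t < (p : ℝ) ∧ (p : ℝ) ≤ t ∧ ¬ Squarefree (roughPart ξ (p - 1))) →
    (S.card : ℝ) ≤ C * (t / (Real.log t * ξ)) := by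
  refine ⟨12 * (8 * Real.log 4), by positivity, fun t ξ ht hξ S hS => ?_⟩
  have hL : 0 < Real.log t := Real.log_pos (by linarith)
  set n := ⌊ξ⌋₊ with hn
  have hn1 : 1 ≤ n := Nat.le_floor (by exact_mod_cast hξ)
  set T := ⌊t⌋₊
  set Q := (Finset.Ioc n (2 ^ T * n)).filter Nat.Prime with hQ
  have hsub : S ⊆ Q.biUnion fun q => S.filter fun p => q ^ 2 ∣ p - 1 := by
    intro p hp
    obtain ⟨hpp, _, hpt, hsq⟩ := hS p hp
    obtain ⟨q, hq, hξq, hqd⟩ := aux_rough _ _ hsq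
    refine Finset.mem_biUnion.2 ⟨q, ?_, Finset.mem_filter.2 ⟨hp, hqd⟩⟩
    refine Finset.mem_filter.2 ⟨Finset.mem_Ioc.2 ⟨?_, ?_⟩, hq⟩
    · exact (Nat.floor_lt (by linarith)).2 hξq
    · have h1 : q ^ 2 ≤ p - 1 := Nat.le_of_dvd (by have := hpp.one_lt; omega) hqd
      have h2 : p ≤ T := Nat.le_floor hpt
      have h3 : q ≤ q ^ 2 := Nat.le_self_pow (by norm_num) q
      have h4 : T < 2 ^ T := Nat.lt_two_pow_self
      have h5 : 2 ^ T ≤ 2 ^ T * n := Nat.le_mul_of_pos_right _ hn1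
      omega
  have h1 : (S.card : ℝ) ≤ ∑ q ∈ Q, 12 * (t / Real.log t) * (Real.log q / (q : ℝ) ^ 2) := by
    calc (S.card : ℝ) ≤ ((Q.biUnion fun q => S.filter fun p => q ^ 2 ∣ p - 1).card : ℝ) := by
          exact_mod_cast Finset.card_le_card hsub
      _ ≤ ∑ q ∈ Q, ((S.filter fun p => q ^ 2 ∣ p - 1).card : ℝ) := by
          exact_mod_cast Finset.card_biUnion_le
      _ ≤ _ := by
          refine Finset.sum_le_sum fun q hq => ?_
          refine aux_ap t ht q (Finset.mem_filter.1 hq).2 _ fun p hp => ?_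
          obtain ⟨hp, hd⟩ := Finset.mem_filter.1 hp
          obtain ⟨h1, h2, h3, _⟩ := hS p hp
          exact ⟨h1, h2, h3, hd⟩
  rw [← Finset.mul_sum] at h1
  have h2 := aux_sum_dyadic T n hn1
  have h3 : 4 * Real.log 4 / n ≤ 8 * Real.log 4 / ξ := by
    have hn0 : (0 : ℝ) < n := by exact_mod_cast hn1
    have : ξ < n + 1 := Nat.lt_floor_add_one ξ
    have h1' : (1 : ℝ) ≤ n := by exact_mod_cast hn1
    have hlog : 0 < Real.log 4 := Real.log_pos (by norm_num)
    rw [div_le_div_iff₀ hn0 (by linarith)]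
    nlinarith
  calc (S.card : ℝ) ≤ 12 * (t / Real.log t) * (8 * Real.log 4 / ξ) := by
        refine h1.trans (mul_le_mul_of_nonneg_left (h2.trans h3) ?_)
        positivity
    _ = _ := by field_simp

lemma aux_omega {ι : Type*} (I : Finset ι) (F : ι → ℤ) (B k : ℕ)
    (hF0 : ∀ i ∈ I, F i ≠ 0) (hF : ∀ i ∈ I, (F i).natAbs ≤ B ^ k) (S : Finset ℕ)
    (hS : ∀ p ∈ S, p.Prime ∧ ∃ i ∈ I, (p : ℤ) ∣ F i) : S.card ≤ I.card * (B * k) := by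
  have hsub : S ⊆ I.biUnion fun i => (F i).natAbs.primeFactors := by
    intro p hp
    obtain ⟨hpp, i, hi, hd⟩ := hS p hp
    refine Finset.mem_biUnion.2 ⟨i, hi, Nat.mem_primeFactors.2 ⟨hpp, ?_, ?_⟩⟩
    · exact Int.natCast_dvd.1 hd
    · exact Int.natAbs_ne_zero.2 (hF0 i hi)
  refine (Finset.card_le_card hsub).trans (Finset.card_biUnion_le.trans ?_)
  refine Finset.sum_le_card_nsmul _ _ _ fun i hi => ?_
  have h0 : (F i).natAbs ≠ 0 := Int.natAbs_ne_zero.2 (hF0 i hi)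
  have h1 : 2 ^ (F i).natAbs.primeFactors.card ≤ 2 ^ (B * k) := by
    calc 2 ^ (F i).natAbs.primeFactors.card ≤ ∏ p ∈ (F i).natAbs.primeFactors, p :=
          Finset.pow_card_le_prod _ _ _ fun p hp => (Nat.prime_of_mem_primeFactors hp).two_le
      _ ≤ (F i).natAbs := Nat.le_of_dvd (Nat.pos_of_ne_zero h0) (Nat.prod_primeFactors_dvd _)
      _ ≤ B ^ k := hF i hi
      _ ≤ (2 ^ B) ^ k := Nat.pow_le_pow_left Nat.lt_two_pow_self.le k
      _ = 2 ^ (B * k) := by rw [pow_mul]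
  exact (Nat.pow_le_pow_iff_right (by norm_num)).1 h1

lemma aux_half_log (t : ℝ) (ht : 2 ≤ t) (p : ℝ) (hp : √t < p) :
    Real.log t / 2 ≤ Real.log p := by
  rw [← Real.log_sqrt (by linarith)]
  exact Real.log_le_log (Real.sqrt_pos.2 (by linarith)) hp.le

lemma L5 (a : ℤ) (ha : a ≠ 0) (ha1 : ∀ j : ℕ, 1 ≤ j → a ^ j ≠ 1) :
    ∃ C : ℝ, 0 < C ∧ ∀ t : ℝ, 2 ≤ t → ∀ S : Finset ℕ,
    (∀ p ∈ S, p.Prime ∧ √t < (p : ℝ) ∧ (p : ℝ) ≤ t ∧ ¬ (p : ℤ) ∣ a ∧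
      (orderOf ((a : ZMod p)) : ℝ) ≤ (p : ℝ) ^ ((1 : ℝ) / 2) / Real.log p) →
    (S.card : ℝ) ≤ C * (t / (Real.log t) ^ ((3 : ℝ) / 2)) := by
  set B := 2 * a.natAbs with hB
  have hapos : 1 ≤ a.natAbs := Nat.one_le_iff_ne_zero.2 (Int.natAbs_ne_zero.2 ha)
  refine ⟨16 * B, by positivity, fun t ht S hS => ?_⟩
  have hL : 0 < Real.log t := Real.log_pos (by linarith)
  have ht0 : 0 < t := by linarith
  set Y := 2 * √t / Real.log t with hY
  have hY0 : 0 ≤ Y := by positivity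
  set n := ⌊Y⌋₊ with hn
  have key : S.card ≤ (Finset.Icc 1 n).card * (B * n) := by
    refine aux_omega (Finset.Icc 1 n) (fun j => a ^ j - 1) B n ?_ ?_ S ?_
    · intro j hj
      exact sub_ne_zero.2 (ha1 j (Finset.mem_Icc.1 hj).1)
    · intro j hj
      obtain ⟨hj1, hjn⟩ := Finset.mem_Icc.1 hj
      calc (a ^ j - 1).natAbs ≤ (a ^ j).natAbs + (1 : ℤ).natAbs := Int.natAbs_sub_le _ _
        _ = a.natAbs ^ j + 1 := by rw [Int.natAbs_pow]; rfl
        _ ≤ 2 * a.natAbs ^ j := by have := Nat.one_le_pow j _ hapos; omega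
        _ ≤ 2 ^ j * a.natAbs ^ j := Nat.mul_le_mul_right _ (Nat.le_self_pow (by omega) 2)
        _ = B ^ j := by rw [hB, mul_pow]
        _ ≤ B ^ n := Nat.pow_le_pow_right (by omega) hjn
    · intro p hp
      obtain ⟨hpp, hpl, hpt, hpa, hord⟩ := hS p hp
      have : Fact p.Prime := ⟨hpp⟩
      have ha' : (a : ZMod p) ≠ 0 := fun h => hpa ((ZMod.intCast_zmod_eq_zero_iff_dvd a p).1 h)
      have hopos : 0 < orderOf (a : ZMod p) := by
        rw [orderOf_pos_iff]
        rw [isOfFinOrder_iff_pow_eq_one]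
        exact ⟨p - 1, by have := hpp.one_lt; omega, ZMod.pow_card_sub_one_eq_one ha'⟩
      refine ⟨hpp, orderOf (a : ZMod p), Finset.mem_Icc.2 ⟨hopos, Nat.le_floor (hord.trans ?_)⟩, ?_⟩
      · rw [← Real.sqrt_eq_rpow]
        calc √(p : ℝ) / Real.log p ≤ √t / (Real.log t / 2) := by
              have := aux_half_log t ht p hpl
              gcongr
          _ = Y := by rw [hY]; field_simp
      · rw [← ZMod.intCast_zmod_eq_zero_iff_dvd]
        push_cast
        rw [pow_orderOf_eq_one, sub_self]
  have key2 : (S.card : ℝ) ≤ B * Y ^ 2 := by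
    have hnY : (n : ℝ) ≤ Y := Nat.floor_le hY0
    rw [Nat.card_Icc, Nat.add_sub_cancel] at key
    calc (S.card : ℝ) ≤ ((n * (B * n) : ℕ) : ℝ) := by exact_mod_cast key
      _ = B * (n : ℝ) ^ 2 := by push_cast; ring
      _ ≤ B * Y ^ 2 := by gcongr
  refine key2.trans ?_
  have hY2 : Y ^ 2 = 4 * t / (Real.log t) ^ 2 := by
    rw [hY, div_pow, mul_pow, Real.sq_sqrt ht0.le]; norm_num
  have hlog : 1 / 4 ≤ Real.log t := by
    have := Real.log_le_log (by norm_num) ht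
    have := Real.log_two_gt_d9
    linarith
  have hs : 1 / 2 ≤ √(Real.log t) := by
    apply Real.le_sqrt_of_sq_le; linarith
  have hpow : (Real.log t) ^ 2 = (Real.log t) ^ ((3 : ℝ) / 2) * √(Real.log t) := by
    rw [Real.sqrt_eq_rpow, ← Real.rpow_add hL, ← Real.rpow_natCast]; norm_num
  rw [hY2, hpow]
  have hp0 : 0 < (Real.log t) ^ ((3 : ℝ) / 2) := Real.rpow_pos_of_pos hL _
  calc (B : ℝ) * (4 * t / ((Real.log t) ^ ((3 : ℝ) / 2) * √(Real.log t)))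
      ≤ B * (4 * t / ((Real.log t) ^ ((3 : ℝ) / 2) * (1 / 2))) := by gcongr
    _ = 8 * B * (t / (Real.log t) ^ ((3 : ℝ) / 2)) := by field_simp; ring
    _ ≤ _ := by gcongr; norm_num

lemma aux_pigeon (a b : ℤ) (p : ℕ) (hpp : p.Prime) (hpa : ¬ (p : ℤ) ∣ a) (hpb : ¬ (p : ℤ) ∣ b)
    (K : ℕ) (hK : ellPair a b p < (K + 1) ^ 2) :
    ∃ u v : ℕ, u ≤ K ∧ v ≤ K ∧ (u ≠ 0 ∨ v ≠ 0) ∧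
      ((p : ℤ) ∣ a ^ u * b ^ v - 1 ∨ (p : ℤ) ∣ a ^ u - b ^ v) := by
  have : Fact p.Prime := ⟨hpp⟩
  have ha : (a : ZMod p) ≠ 0 := fun h => hpa ((ZMod.intCast_zmod_eq_zero_iff_dvd a p).1 h)
  have hb : (b : ZMod p) ≠ 0 := fun h => hpb ((ZMod.intCast_zmod_eq_zero_iff_dvd b p).1 h)
  set H := Submonoid.closure ({(a : ZMod p), (b : ZMod p)} : Set (ZMod p)) with hH
  set T : Finset (ZMod p) := Finset.univ.filter (· ∈ H) with hT
  have hTc : T.card = ellPair a b p := by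
    unfold ellPair
    rw [← hH, Nat.card_eq_fintype_card, Fintype.card_subtype]
  have hmem : ∀ i j : ℕ, (a : ZMod p) ^ i * (b : ZMod p) ^ j ∈ H := fun i j =>
    H.mul_mem (H.pow_mem (Submonoid.subset_closure (by simp)) i)
      (H.pow_mem (Submonoid.subset_closure (by simp)) j)
  obtain ⟨⟨i, j⟩, h1, ⟨i', j'⟩, h2, hne, heq⟩ :=
    Finset.exists_ne_map_eq_of_card_lt_of_maps_to
      (s := Finset.range (K + 1) ×ˢ Finset.range (K + 1)) (t := T)
      (by rw [hTc, Finset.card_product, Finset.card_range, ← pow_two]; exact hK)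
      (f := fun x => (a : ZMod p) ^ x.1 * (b : ZMod p) ^ x.2)
      (fun x _ => by simp only [hT, Finset.coe_filter, Set.mem_ofPred_eq]
                     exact ⟨Finset.mem_univ _, hmem _ _⟩)
  simp only [Finset.mem_product, Finset.mem_range] at h1 h2 heq
  have main : ∀ i j i' j' : ℕ, i ≤ K → j ≤ K → i' ≤ K → j' ≤ K → (i, j) ≠ (i', j') → i' ≤ i →
      (a : ZMod p) ^ i * (b : ZMod p) ^ j = (a : ZMod p) ^ i' * (b : ZMod p) ^ j' →
      ∃ u v : ℕ, u ≤ K ∧ v ≤ K ∧ (u ≠ 0 ∨ v ≠ 0) ∧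
      ((p : ℤ) ∣ a ^ u * b ^ v - 1 ∨ (p : ℤ) ∣ a ^ u - b ^ v) := by
    intro i j i' j' hi hj hi' hj' hne hii heq
    have hne' : i ≠ i' ∨ j ≠ j' := by
      by_contra h
      push Not at h
      exact hne (by rw [h.1, h.2])
    obtain ⟨u, rfl⟩ := Nat.exists_eq_add_of_le hii
    rcases le_total j' j with hjj | hjj
    · obtain ⟨v, rfl⟩ := Nat.exists_eq_add_of_le hjj
      refine ⟨u, v, by omega, by omega, by omega, Or.inl ?_⟩
      rw [← ZMod.intCast_zmod_eq_zero_iff_dvd]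
      push_cast
      have : (a : ZMod p) ^ i' * (b : ZMod p) ^ j' * ((a : ZMod p) ^ u * (b : ZMod p) ^ v - 1) = 0 := by
        rw [pow_add, pow_add] at heq
        linear_combination heq
      exact (mul_eq_zero.1 this).resolve_left (mul_ne_zero (pow_ne_zero _ ha) (pow_ne_zero _ hb))
    · obtain ⟨v, rfl⟩ := Nat.exists_eq_add_of_le hjj
      refine ⟨u, v, by omega, by omega, by omega, Or.inr ?_⟩
      rw [← ZMod.intCast_zmod_eq_zero_iff_dvd]
      push_cast
      have : (a : ZMod p) ^ i' * (b : ZMod p) ^ j * ((a : ZMod p) ^ u - (b : ZMod p) ^ v) = 0 := by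
        rw [pow_add, pow_add] at heq
        linear_combination heq
      exact (mul_eq_zero.1 this).resolve_left (mul_ne_zero (pow_ne_zero _ ha) (pow_ne_zero _ hb))
  rcases le_total i' i with h | h
  · exact main i j i' j' (by omega) (by omega) (by omega) (by omega) hne h heq
  · exact main i' j' i j (by omega) (by omega) (by omega) (by omega) hne.symm h heq.symm

lemma L6 (a b : ℤ) (ha : a ≠ 0) (hb : b ≠ 0)
    (h1 : ∀ u v : ℕ, (u ≠ 0 ∨ v ≠ 0) → a ^ u * b ^ v ≠ 1)
    (h2 : ∀ u v : ℕ, (u ≠ 0 ∨ v ≠ 0) → a ^ u ≠ b ^ v) :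
    ∃ C : ℝ, 0 < C ∧ ∀ t : ℝ, 2 ≤ t → ∀ S : Finset ℕ,
    (∀ p ∈ S, p.Prime ∧ √t < (p : ℝ) ∧ (p : ℝ) ≤ t ∧ ¬ (p : ℤ) ∣ a ∧ ¬ (p : ℤ) ∣ b ∧
      (ellPair a b p : ℝ) ≤ (p : ℝ) ^ ((2 : ℝ) / 3) / Real.log p) →
    (S.card : ℝ) ≤ C * (t / (Real.log t) ^ ((3 : ℝ) / 2)) := by
  set A := a.natAbs * b.natAbs with hA
  have hapos : 1 ≤ a.natAbs := Nat.one_le_iff_ne_zero.2 (Int.natAbs_ne_zero.2 ha)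
  have hbpos : 1 ≤ b.natAbs := Nat.one_le_iff_ne_zero.2 (Int.natAbs_ne_zero.2 hb)
  have hApos : 1 ≤ A := Nat.mul_pos hapos hbpos
  refine ⟨2 * (2 * A) * 8 * 2 ^ ((3 : ℝ) / 2), by positivity, fun t ht S hS => ?_⟩
  have hL : 0 < Real.log t := Real.log_pos (by linarith)
  have ht0 : 0 < t := by linarith
  set Y := 2 * t ^ ((2 : ℝ) / 3) / Real.log t with hY
  have hY1 : 1 ≤ Y := by
    rw [hY, one_le_div hL]
    have := Real.log_le_rpow_div ht0.le (show (0 : ℝ) < 2 / 3 by norm_num)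
    have h0 : 0 < t ^ ((2 : ℝ) / 3) := by positivity
    linarith
  set K := ⌊√Y⌋₊ with hK
  have hsY : 1 ≤ √Y := Real.one_le_sqrt.2 hY1
  have hKle : ((K : ℝ) + 1) ≤ 2 * √Y := by
    have := Nat.floor_le (Real.sqrt_nonneg Y)
    rw [← hK] at this
    linarith
  have hKlt : Y < ((K : ℝ) + 1) ^ 2 := by
    have h3 : √Y < K + 1 := Nat.lt_floor_add_one _
    calc Y = √Y ^ 2 := (Real.sq_sqrt (by linarith)).symm
      _ < _ := by gcongr
  set I : Finset ((ℕ × ℕ) × Bool) :=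
    ((Finset.range (K + 1) ×ˢ Finset.range (K + 1)) ×ˢ (Finset.univ : Finset Bool)).filter
      (fun x => x.1.1 ≠ 0 ∨ x.1.2 ≠ 0) with hI
  have hIc : I.card ≤ 2 * (K + 1) ^ 2 := by
    refine (Finset.card_filter_le _ _).trans (le_of_eq ?_)
    simp only [Finset.card_product, Finset.card_range, Finset.card_univ, Fintype.card_bool]
    ring
  have hpa : ∀ u ≤ K, a.natAbs ^ u ≤ a.natAbs ^ K := fun u hu => Nat.pow_le_pow_right hapos hu
  have hpb : ∀ u ≤ K, b.natAbs ^ u ≤ b.natAbs ^ K := fun u hu => Nat.pow_le_pow_right hbpos hu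
  have hA2 : 2 * A ^ K ≤ (2 * A) ^ (K + 1) := by
    calc 2 * A ^ K ≤ 2 ^ (K + 1) * A ^ (K + 1) :=
          Nat.mul_le_mul (Nat.le_self_pow (by omega) 2) (Nat.pow_le_pow_right hApos (by omega))
      _ = _ := (mul_pow _ _ _).symm
  have h1a : 1 ≤ a.natAbs ^ K := Nat.one_le_pow _ _ hapos
  have h1b : 1 ≤ b.natAbs ^ K := Nat.one_le_pow _ _ hbpos
  have hAK : A ^ K = a.natAbs ^ K * b.natAbs ^ K := by rw [hA, mul_pow]
  have key : S.card ≤ I.card * (2 * A * (K + 1)) := by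
    refine aux_omega I (fun x => if x.2 then a ^ x.1.1 * b ^ x.1.2 - 1 else a ^ x.1.1 - b ^ x.1.2)
      (2 * A) (K + 1) ?_ ?_ S ?_
    · rintro ⟨⟨u, v⟩, s⟩ hx
      have hx' := (Finset.mem_filter.1 hx).2
      cases s
      · simpa [sub_eq_zero] using h2 u v hx'
      · simpa [sub_eq_zero] using h1 u v hx'
    · rintro ⟨⟨u, v⟩, s⟩ hx
      have hx' := (Finset.mem_filter.1 hx).1
      simp only [Finset.mem_product, Finset.mem_range] at hx'
      have hu := hpa u (by omega)
      have hv := hpb v (by omega)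
      refine le_trans ?_ hA2
      rw [hAK]
      cases s
      · simp only [Bool.false_eq_true, if_false]
        refine (Int.natAbs_sub_le _ _).trans ?_
        rw [Int.natAbs_pow, Int.natAbs_pow]
        nlinarith
      · simp only [if_true]
        refine (Int.natAbs_sub_le _ _).trans ?_
        rw [Int.natAbs_mul, Int.natAbs_pow, Int.natAbs_pow]
        have := Nat.mul_le_mul hu hv
        have h3 := Nat.mul_le_mul h1a h1b
        simp only [Int.natAbs_one]
        omega
    · intro p hp
      obtain ⟨hpp, hpl, hpt, hpa, hpb, hell⟩ := hS p hp
      refine ⟨hpp, ?_⟩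
      have hlt : ellPair a b p < (K + 1) ^ 2 := by
        have : (ellPair a b p : ℝ) < ((K : ℝ) + 1) ^ 2 := by
          refine lt_of_le_of_lt (hell.trans ?_) hKlt
          calc (p : ℝ) ^ ((2 : ℝ) / 3) / Real.log p ≤ t ^ ((2 : ℝ) / 3) / (Real.log t / 2) := by
                have := aux_half_log t ht p hpl
                gcongr
            _ = Y := by rw [hY]; field_simp
        exact_mod_cast this
      obtain ⟨u, v, hu, hv, huv, h⟩ := aux_pigeon a b p hpp hpa hpb K hlt
      rcases h with h | h
      · refine ⟨((u, v), true), ?_, by simpa using h⟩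
        simp only [hI, Finset.mem_filter, Finset.mem_product, Finset.mem_range, Finset.mem_univ]
        exact ⟨⟨⟨by omega, by omega⟩, trivial⟩, huv⟩
      · refine ⟨((u, v), false), ?_, by simpa using h⟩
        simp only [hI, Finset.mem_filter, Finset.mem_product, Finset.mem_range, Finset.mem_univ]
        exact ⟨⟨⟨by omega, by omega⟩, trivial⟩, huv⟩
  have key2 : (S.card : ℝ) ≤ 2 * (2 * A) * ((K : ℝ) + 1) ^ 3 := by
    have h3 : S.card ≤ 2 * (K + 1) ^ 2 * (2 * A * (K + 1)) :=
      key.trans (Nat.mul_le_mul_right _ hIc)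
    calc (S.card : ℝ) ≤ ((2 * (K + 1) ^ 2 * (2 * A * (K + 1)) : ℕ) : ℝ) := by exact_mod_cast h3
      _ = _ := by push_cast; ring
  have hYp : √Y ^ 3 = 2 ^ ((3 : ℝ) / 2) * (t / (Real.log t) ^ ((3 : ℝ) / 2)) := by
    rw [Real.sqrt_eq_rpow, ← Real.rpow_natCast, ← Real.rpow_mul (by linarith)]
    rw [hY, Real.div_rpow (by positivity) hL.le, Real.mul_rpow (by norm_num) (by positivity),
      ← Real.rpow_mul ht0.le]
    norm_num
    ring
  calc (S.card : ℝ) ≤ 2 * (2 * A) * ((K : ℝ) + 1) ^ 3 := key2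
    _ ≤ 2 * (2 * A) * (2 * √Y) ^ 3 := by gcongr
    _ = 2 * (2 * A) * 8 * √Y ^ 3 := by ring
    _ = _ := by rw [hYp]; ring

noncomputable def rankinF : ℕ →*₀ ℝ where
  toFun d := (d : ℝ) ^ (-(3 / 4) : ℝ)
  map_zero' := by
    rw [Nat.cast_zero, Real.zero_rpow (by norm_num)]
  map_one' := by simp
  map_mul' m n := by
    push_cast
    exact Real.mul_rpow (Nat.cast_nonneg _) (Nat.cast_nonneg _)

lemma rankinF_apply (d : ℕ) : rankinF d = (d : ℝ) ^ (-(3 / 4) : ℝ) := rfl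

lemma rankinF_prime (p : ℕ) (hp : p.Prime) : 0 ≤ rankinF p ∧ rankinF p ≤ 2 / 3 := by
  rw [rankinF_apply]
  have h2 : (2 : ℝ) ≤ p := by exact_mod_cast hp.two_le
  refine ⟨by positivity, ?_⟩
  have h1 : (p : ℝ) ^ (-(3 / 4) : ℝ) ≤ 2 ^ (-(3 / 4) : ℝ) :=
    Real.rpow_le_rpow_of_nonpos (by norm_num) h2 (by norm_num)
  refine h1.trans ?_
  have h0 : (0 : ℝ) ≤ 2 ^ (-(3 / 4) : ℝ) := by positivity
  have h3 : ((2 : ℝ) ^ (-(3 / 4) : ℝ)) ^ 4 = 1 / 8 := by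
    rw [← Real.rpow_natCast, ← Real.rpow_mul (by norm_num)]
    norm_num
  refine le_of_pow_le_pow_left₀ (n := 4) (by norm_num) (by norm_num) ?_
  rw [h3]; norm_num

lemma aux_sum_rpow (n : ℕ) :
    ∑ i ∈ Finset.range n, ((i + 1 : ℕ) : ℝ) ^ (-(3 / 4) : ℝ) ≤ 4 * (n : ℝ) ^ (1 / 4 : ℝ) := by
  induction n with
  | zero => simp
  | succ n ih =>
    rw [Finset.sum_range_succ]
    set u := ((n + 1 : ℕ) : ℝ) ^ (1 / 4 : ℝ) with hu
    set w := (n : ℝ) ^ (1 / 4 : ℝ) with hw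
    have hu0 : 0 < u := Real.rpow_pos_of_pos (by positivity) _
    have hw0 : 0 ≤ w := by positivity
    have hu4 : u ^ 4 = n + 1 := by
      rw [hu, ← Real.rpow_natCast, ← Real.rpow_mul (by positivity)]; norm_num
    have hw4 : w ^ 4 = n := by
      rw [hw, ← Real.rpow_natCast, ← Real.rpow_mul (by positivity)]; norm_num
    have hneg : ((n + 1 : ℕ) : ℝ) ^ (-(3 / 4) : ℝ) = (u ^ 3)⁻¹ := by
      rw [hu, ← Real.rpow_natCast, ← Real.rpow_mul (by positivity), ← Real.rpow_neg (by positivity)]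
      norm_num
    rw [hneg]
    have hwu : w ≤ u := by
      refine le_of_pow_le_pow_left₀ (n := 4) (by norm_num) hu0.le ?_
      rw [hu4, hw4]; linarith
    have : (u ^ 3)⁻¹ ≤ 4 * (u - w) := by
      rw [inv_le_iff_one_le_mul₀ (by positivity)]
      have h1 : 1 = (u - w) * (u ^ 3 + u ^ 2 * w + u * w ^ 2 + w ^ 3) := by
        linear_combination hw4 - hu4
      have h2 : u ^ 2 * w ≤ u ^ 3 := by nlinarith [sq_nonneg u]
      have h3 : u * w ^ 2 ≤ u ^ 3 := by
        have : w ^ 2 ≤ u ^ 2 := by gcongr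
        nlinarith
      have h4 : w ^ 3 ≤ u ^ 3 := by gcongr
      have h5 : (u - w) * (u ^ 3 + u ^ 2 * w + u * w ^ 2 + w ^ 3) ≤ (u - w) * (4 * u ^ 3) :=
        mul_le_mul_of_nonneg_left (by linarith) (by linarith)
      linarith
    linarith

lemma aux_rankin (n : ℕ) (D : Finset ℕ) (hD : ∀ d ∈ D, d ∈ Nat.smoothNumbers (n + 1)) :
    ∑ d ∈ D, (d : ℝ) ^ (-(3 / 4) : ℝ) ≤ Real.exp (12 * (n : ℝ) ^ (1 / 4 : ℝ)) := by
  have hlt : ∀ {p : ℕ}, p.Prime → ‖rankinF p‖ < 1 := by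
    intro p hp
    obtain ⟨h0, h1⟩ := rankinF_prime p hp
    rw [Real.norm_of_nonneg h0]; linarith
  have hs : HasSum (fun m : Nat.smoothNumbers (n + 1) => rankinF m)
      (∏ p ∈ (n + 1).primesBelow, (1 - rankinF p)⁻¹) :=
    (EulerProduct.summable_and_hasSum_smoothNumbers_prod_primesBelow_geometric
      (f := (rankinF : ℕ →* ℝ)) hlt (n + 1)).2
  have h1 : ∑ d ∈ D, (d : ℝ) ^ (-(3 / 4) : ℝ) ≤ ∏ p ∈ (n + 1).primesBelow, (1 - rankinF p)⁻¹ := by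
    rw [← hs.tsum_eq]
    have := hs.summable.sum_le_tsum (D.attach.map
      ⟨fun d => (⟨d.1, hD d.1 d.2⟩ : Nat.smoothNumbers (n + 1)), fun x y h =>
        Subtype.ext (Subtype.mk.inj h)⟩) (fun i _ => by rw [rankinF_apply]; positivity)
    rw [Finset.sum_map] at this
    refine le_trans (le_of_eq ?_) this
    rw [← Finset.sum_attach]
    rfl
  refine h1.trans ?_
  have h2 : ∏ p ∈ (n + 1).primesBelow, (1 - rankinF p)⁻¹
      ≤ ∏ p ∈ (n + 1).primesBelow, Real.exp (3 * rankinF p) := by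
    refine Finset.prod_le_prod ?_ ?_
    · intro p hp
      obtain ⟨h0, h1⟩ := rankinF_prime p (Nat.prime_of_mem_primesBelow hp)
      exact inv_nonneg.2 (by linarith)
    · intro p hp
      obtain ⟨h0, h1⟩ := rankinF_prime p (Nat.prime_of_mem_primesBelow hp)
      rw [inv_le_iff_one_le_mul₀ (by linarith)]
      have := Real.add_one_le_exp (3 * rankinF p)
      nlinarith
  refine h2.trans ?_
  rw [← Real.exp_sum, Real.exp_le_exp, ← Finset.mul_sum]
  have h3 : ∑ p ∈ (n + 1).primesBelow, rankinF p
      ≤ ∑ i ∈ Finset.range n, ((i + 1 : ℕ) : ℝ) ^ (-(3 / 4) : ℝ) := by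
    have h4 : ∑ i ∈ Finset.range n, ((i + 1 : ℕ) : ℝ) ^ (-(3 / 4) : ℝ)
        = ∑ i ∈ (Finset.range n).image (fun i : ℕ => i + 1), (i : ℝ) ^ (-(3 / 4) : ℝ) := by
      rw [Finset.sum_image]
      intro x _ y _ h
      simpa using h
    rw [h4]
    refine Finset.sum_le_sum_of_subset_of_nonneg ?_ fun i _ _ => by rw [rankinF_apply]; positivity
    intro p hp
    have hpp := Nat.prime_of_mem_primesBelow hp
    have hlt' := Nat.lt_of_mem_primesBelow hp
    refine Finset.mem_image.2 ⟨p - 1, Finset.mem_range.2 ?_, ?_⟩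
    · have := hpp.one_lt; omega
    · have := hpp.one_lt; omega
  have := aux_sum_rpow n
  linarith

lemma smoothPart_dvd (z : ℝ) (m : ℕ) (hm : m ≠ 0) : smoothPart z m ∣ m := by
  conv_rhs => rw [← Nat.prod_factorization_pow_eq_self hm]
  exact Finset.prod_dvd_prod_of_subset _ _ _ (Finset.filter_subset _ _)

lemma smoothPart_mem (z : ℝ) (m : ℕ) :
    smoothPart z m ∈ Nat.smoothNumbers (⌊z⌋₊ + 1) := by
  rw [Nat.mem_smoothNumbers']
  intro q hq hd
  obtain ⟨r, hr, hqr⟩ := (hq.prime.dvd_finsetProd_iff _).1 hd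
  obtain ⟨hr, hzr⟩ := Finset.mem_filter.1 hr
  have := (Nat.prime_dvd_prime_iff_eq hq (Nat.prime_of_mem_primeFactors hr)).1 (hq.dvd_of_dvd_pow hqr)
  rw [this]
  exact Nat.lt_succ_of_le (Nat.le_floor hzr)

lemma L3 : ∃ C : ℝ, 0 < C ∧ ∀ t ξ : ℝ, 2 ≤ t → 1 ≤ ξ → ξ ≤ 2 * Real.log t → ∀ S : Finset ℕ,
    (∀ p ∈ S, p.Prime ∧ √t < (p : ℝ) ∧ (p : ℝ) ≤ t ∧
      Real.exp (√(Real.log p)) < (smoothPart ξ (p - 1) : ℝ)) →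
    (S.card : ℝ) ≤ C * (t / (Real.log t) ^ ((3 : ℝ) / 2)) := by
  refine ⟨Real.exp 338 * 720, by positivity, fun t ξ ht hξ hξL S hS => ?_⟩
  have hL : 0 < Real.log t := Real.log_pos (by linarith)
  have ht0 : 0 < t := by linarith
  set L := Real.log t with hLdef
  set y := Real.exp (√(L / 2)) with hy
  have hy0 : 0 < y := Real.exp_pos _
  set T := ⌊t⌋₊ with hT
  have hTt : (T : ℝ) ≤ t := Nat.floor_le ht0.le
  set D := S.image (fun p => smoothPart ξ (p - 1)) with hD
  have hDy : ∀ d ∈ D, y < (d : ℝ) := by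
    intro d hd
    obtain ⟨p, hp, rfl⟩ := Finset.mem_image.1 hd
    obtain ⟨_, hpl, _, h⟩ := hS p hp
    refine lt_of_le_of_lt ?_ h
    exact Real.exp_le_exp.2 (Real.sqrt_le_sqrt (aux_half_log t ht p hpl))
  have hcard : (S.card : ℝ) ≤ ∑ d ∈ D, t * (y ^ (-(1 / 4) : ℝ) * (d : ℝ) ^ (-(3 / 4) : ℝ)) := by
    rw [Finset.card_eq_sum_card_fiberwise (f := fun p => smoothPart ξ (p - 1)) (t := D)
      (fun p hp => Finset.mem_image_of_mem _ hp)]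
    push_cast
    refine Finset.sum_le_sum fun d hd => ?_
    have hdy := hDy d hd
    have hd0 : (0 : ℝ) < d := hy0.trans hdy
    have hfib : (S.filter (fun p => smoothPart ξ (p - 1) = d)).card ≤ T / d := by
      rw [← Nat.Ioc_filter_dvd_card_eq_div]
      refine Finset.card_le_card_of_injOn (fun p => p - 1) ?_ ?_
      · intro p hp
        obtain ⟨hp, hpd⟩ := Finset.mem_filter.1 hp
        obtain ⟨hpp, _, hpt, _⟩ := hS p hp
        have h1 := hpp.one_lt
        have h2 : p ≤ T := Nat.le_floor hpt
        refine Finset.mem_filter.2 ⟨Finset.mem_Ioc.2 ⟨?_, ?_⟩, ?_⟩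
        · show 0 < p - 1
          omega
        · show p - 1 ≤ T
          omega
        · rw [← hpd]; exact smoothPart_dvd _ _ (by omega)
      · intro p hp p' hp' h
        have h1 := (hS p (Finset.mem_filter.1 hp).1).1.one_lt
        have h2 := (hS p' (Finset.mem_filter.1 hp').1).1.one_lt
        simp only at h
        omega
    calc ((S.filter (fun p => smoothPart ξ (p - 1) = d)).card : ℝ) ≤ ((T / d : ℕ) : ℝ) := by
          exact_mod_cast hfib
      _ ≤ (T : ℝ) / d := Nat.cast_div_le
      _ ≤ t / d := by gcongr
      _ = t * ((d : ℝ) ^ (-(1 / 4) : ℝ) * (d : ℝ) ^ (-(3 / 4) : ℝ)) := by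
          rw [← Real.rpow_add hd0]
          norm_num
          rw [Real.rpow_neg_one]
          rfl
      _ ≤ _ := by
          have : (d : ℝ) ^ (-(1 / 4) : ℝ) ≤ y ^ (-(1 / 4) : ℝ) :=
            Real.rpow_le_rpow_of_nonpos hy0 hdy.le (by norm_num)
          gcongr
  rw [← Finset.mul_sum, ← Finset.mul_sum] at hcard
  have hr := aux_rankin ⌊ξ⌋₊ D (fun d hd => by
    obtain ⟨p, hp, rfl⟩ := Finset.mem_image.1 hd
    exact smoothPart_mem _ _)
  set s := (2 * L) ^ (1 / 4 : ℝ) with hs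
  have hs0 : 0 < s := Real.rpow_pos_of_pos (by positivity) _
  have hs4 : s ^ 4 = 2 * L := by
    rw [hs, ← Real.rpow_natCast, ← Real.rpow_mul (by positivity)]; norm_num
  have hsq : √(L / 2) = s ^ 2 / 2 := by
    rw [show L / 2 = (s ^ 2 / 2) ^ 2 by linear_combination (-1 / 4) * hs4]
    exact Real.sqrt_sq (by positivity)
  have hfl : (⌊ξ⌋₊ : ℝ) ^ (1 / 4 : ℝ) ≤ s := by
    refine Real.rpow_le_rpow (Nat.cast_nonneg _) ?_ (by norm_num)
    exact (Nat.floor_le (by linarith)).trans hξL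
  have hyp : y ^ (-(1 / 4) : ℝ) = Real.exp (-(s ^ 2 / 8)) := by
    rw [hy, ← Real.exp_mul, hsq]; congr 1; ring
  have hL32 : L ^ ((3 : ℝ) / 2) ≤ s ^ 6 := by
    have : s ^ 6 = (2 * L) ^ ((3 : ℝ) / 2) := by
      rw [hs, ← Real.rpow_natCast, ← Real.rpow_mul (by positivity)]; norm_num
    rw [this]
    exact Real.rpow_le_rpow hL.le (by linarith) (by norm_num)
  have hL0 : 0 < L ^ ((3 : ℝ) / 2) := Real.rpow_pos_of_pos hL _
  have hexp : Real.exp (-(s ^ 2 / 8)) * Real.exp (12 * s) ≤ Real.exp 338 * Real.exp (-s) := by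
    rw [← Real.exp_add, ← Real.exp_add, Real.exp_le_exp]
    nlinarith [sq_nonneg (s - 52)]
  have hes : Real.exp (-s) * s ^ 6 ≤ 720 := by
    have := Real.pow_div_factorial_le_exp s hs0.le 6
    rw [div_le_iff₀ (by positivity)] at this
    have h720 : ((Nat.factorial 6 : ℕ) : ℝ) = 720 := by norm_num [Nat.factorial]
    rw [h720] at this
    rw [Real.exp_neg, inv_mul_le_iff₀ (Real.exp_pos s)]
    exact this
  calc (S.card : ℝ) ≤ t * (Real.exp (-(s ^ 2 / 8)) * Real.exp (12 * s)) := by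
        refine hcard.trans ?_
        rw [hyp]
        have : Real.exp (12 * (⌊ξ⌋₊ : ℝ) ^ (1 / 4 : ℝ)) ≤ Real.exp (12 * s) :=
          Real.exp_le_exp.2 (by linarith)
        gcongr
        exact hr.trans this
    _ ≤ t * (Real.exp 338 * Real.exp (-s)) := by gcongr
    _ ≤ t * (Real.exp 338 * (720 / L ^ ((3 : ℝ) / 2))) := by
        gcongr
        rw [le_div_iff₀ hL0]
        refine le_trans ?_ hes
        gcongr
    _ = _ := by ring

lemma card_le_of_le (S : Finset ℕ) (y : ℝ) (hy : 0 ≤ y)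
    (h : ∀ p ∈ S, p.Prime ∧ (p : ℝ) ≤ y) : (S.card : ℝ) ≤ y := by
  have hsub : S ⊆ Finset.Icc 1 ⌊y⌋₊ := fun p hp =>
    Finset.mem_Icc.2 ⟨(h p hp).1.one_lt.le, Nat.le_floor (h p hp).2⟩
  have := Finset.card_le_card hsub
  rw [Nat.card_Icc, Nat.add_sub_cancel] at this
  exact (Nat.cast_le.2 this).trans (Nat.floor_le hy)

/-- **Lemma (bound for `π_U(t)`).** For `a, b` nonzero multiplicatively independent
integers and all large `x`, uniformly for `2 ≤ t ≤ x`, the number of primes `p ≤ t`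
in `U(x)` is `O(log x/log log x + t/(log t)^(3/2) + t/(log t · log log x))`. -/
theorem stmt_18 (a b : ℤ) (ha : a ≠ 0) (hb : b ≠ 0)
    (hind : ∀ m n : ℤ, (a : ℚ) ^ m * (b : ℚ) ^ n = 1 → m = 0 ∧ n = 0) :
    ∃ C : ℝ, 0 < C ∧ ∃ x₀ : ℝ, ∀ x : ℝ, 16 ≤ x → x₀ ≤ x →
      ∀ t : ℝ, 2 ≤ t → t ≤ x →
        (Nat.card {p : ℕ | Nat.Prime p ∧ (p : ℝ) ≤ x ∧ UCond a b x p ∧ (p : ℝ) ≤ t} : ℝ)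
          ≤ C * (Real.log x / Real.log (Real.log x)
              + t / (Real.log t) ^ ((3 : ℝ) / 2)
              + t / (Real.log t * Real.log (Real.log x))) := by
  have hnat1 : ∀ u v : ℕ, (u ≠ 0 ∨ v ≠ 0) → a ^ u * b ^ v ≠ 1 := by
    intro u v huv h
    have := hind u v (by
      rw [zpow_natCast, zpow_natCast]
      exact_mod_cast h)
    omega
  have hnat2 : ∀ u v : ℕ, (u ≠ 0 ∨ v ≠ 0) → a ^ u ≠ b ^ v := by
    intro u v huv h
    have hbq : (b : ℚ) ^ v ≠ 0 := pow_ne_zero _ (Int.cast_ne_zero.2 hb)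
    have h' : (a : ℚ) ^ u = (b : ℚ) ^ v := by exact_mod_cast h
    have := hind u (-(v : ℤ)) (by
      rw [zpow_neg, zpow_natCast, zpow_natCast, h', mul_inv_cancel₀ hbq])
    omega
  obtain ⟨C3, hC3, H3⟩ := L3
  obtain ⟨C4, hC4, H4⟩ := L4
  obtain ⟨Ca, hCa, Ha⟩ := L5 a ha (fun j hj h => hnat1 j 0 (Or.inl (by omega)) (by simpa using h))
  obtain ⟨Cb, hCb, Hb⟩ := L5 b hb (fun j hj h => hnat1 0 j (Or.inr (by omega)) (by simpa using h))
  obtain ⟨C6, hC6, H6⟩ := L6 a b ha hb hnat1 hnat2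
  set N := (a * b).natAbs with hN
  have hab : a * b ≠ 0 := mul_ne_zero ha hb
  refine ⟨3 ^ ((3 : ℝ) / 2) + N + 4 + C3 + C4 + Ca + Cb + C6, by positivity,
    Real.exp (Real.exp 1), fun x hx16 hx t ht htx => ?_⟩
  have hxpos : 0 < x := by linarith
  have hlx : Real.exp 1 ≤ Real.log x := (Real.le_log_iff_exp_le hxpos).2 hx
  have hlx0 : 0 < Real.log x := (Real.exp_pos 1).trans_le hlx
  have hξ1 : 1 ≤ Real.log (Real.log x) := (Real.le_log_iff_exp_le hlx0).2 hlx
  set ξ := Real.log (Real.log x) with hξ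
  have hexpξ : Real.exp ξ = Real.log x := Real.exp_log hlx0
  have hL : 0 < Real.log t := Real.log_pos (by linarith)
  have ht0 : 0 < t := by linarith
  have hL0 : 0 < Real.log t ^ ((3 : ℝ) / 2) := Real.rpow_pos_of_pos hL _
  set E1 := Real.log x / ξ with hE1
  set E2 := t / Real.log t ^ ((3 : ℝ) / 2) with hE2
  set E3 := t / (Real.log t * ξ) with hE3
  have hE1pos : 0 ≤ E1 := by positivity
  have hE2pos : 0 ≤ E2 := by positivity
  have hE3pos : 0 ≤ E3 := by positivity
  set S : Finset ℕ := (Finset.range (⌊t⌋₊ + 1)).filter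
    (fun p => p.Prime ∧ (p : ℝ) ≤ x ∧ UCond a b x p ∧ (p : ℝ) ≤ t) with hS
  have hset : {p : ℕ | Nat.Prime p ∧ (p : ℝ) ≤ x ∧ UCond a b x p ∧ (p : ℝ) ≤ t} = (S : Set ℕ) := by
    ext p
    simp only [hS, Finset.coe_filter, Finset.mem_range]
    constructor
    · intro h
      exact ⟨Nat.lt_succ_of_le (Nat.le_floor h.2.2.2), h⟩
    · intro h
      exact h.2
  have hcard : Nat.card {p : ℕ | Nat.Prime p ∧ (p : ℝ) ≤ x ∧ UCond a b x p ∧ (p : ℝ) ≤ t} = S.card := by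
    rw [hset]
    exact (Nat.card_eq_fintype_card).trans (Fintype.card_coe S)
  rw [hcard]
  have hSp : ∀ p ∈ S, p.Prime ∧ UCond a b x p ∧ (p : ℝ) ≤ t := fun p hp => by
    have := (Finset.mem_filter.1 hp).2
    exact ⟨this.1, this.2.2.1, this.2.2.2⟩
  have hN0 : (0 : ℝ) ≤ N := Nat.cast_nonneg N
  have h30 : (0 : ℝ) ≤ 3 ^ ((3 : ℝ) / 2) := by positivity
  rcases lt_or_ge (2 * Real.log t) ξ with hcase | hcase
  · have h1 : (S.card : ℝ) ≤ t := card_le_of_le S t ht0.le fun p hp => ⟨(hSp p hp).1, (hSp p hp).2.2⟩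
    have h2 : t ≤ 2 * E1 := by
      have h3 : t ≤ Real.exp (ξ / 2) := by
        rw [← Real.log_le_iff_le_exp ht0]; linarith
      have h4 : Real.log x = Real.exp (ξ / 2) * Real.exp (ξ / 2) := by
        rw [← Real.exp_add, ← hexpξ]; congr 1; ring
      have h5 := Real.add_one_le_exp (ξ / 2)
      have h6 := Real.exp_pos (ξ / 2)
      rw [hE1, h4, ← mul_div_assoc, le_div_iff₀ (by linarith)]
      nlinarith
    calc (S.card : ℝ) ≤ 2 * E1 := h1.trans h2
      _ ≤ (3 ^ ((3 : ℝ) / 2) + N + 4 + C3 + C4 + Ca + Cb + C6) * (E1 + E2 + E3) := by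
        refine mul_le_mul ?_ ?_ hE1pos (by positivity) <;> linarith
  · set S0 := S.filter (fun p : ℕ => (p : ℝ) ≤ √t) with hS0
    set S1 := S.filter (fun p : ℕ => (p : ℤ) ∣ a * b) with hS1
    set S2 := S.filter (fun p : ℕ => (p : ℝ) ≤ ξ) with hS2
    set S3 := S.filter (fun p : ℕ => √t < (p : ℝ) ∧
      Real.exp (√(Real.log p)) < (smoothPart ξ (p - 1) : ℝ)) with hS3
    set S4 := S.filter (fun p : ℕ => √t < (p : ℝ) ∧ ¬ Squarefree (roughPart ξ (p - 1))) with hS4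
    set Sa := S.filter (fun p : ℕ => √t < (p : ℝ) ∧ ¬ (p : ℤ) ∣ a ∧
      (orderOf ((a : ZMod p)) : ℝ) ≤ (p : ℝ) ^ ((1 : ℝ) / 2) / Real.log p) with hSa
    set Sb := S.filter (fun p : ℕ => √t < (p : ℝ) ∧ ¬ (p : ℤ) ∣ b ∧
      (orderOf ((b : ZMod p)) : ℝ) ≤ (p : ℝ) ^ ((1 : ℝ) / 2) / Real.log p) with hSb
    set S6 := S.filter (fun p : ℕ => √t < (p : ℝ) ∧ ¬ (p : ℤ) ∣ a ∧ ¬ (p : ℤ) ∣ b ∧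
      (ellPair a b p : ℝ) ≤ (p : ℝ) ^ ((2 : ℝ) / 3) / Real.log p) with hS6
    have hsub : S ⊆ S0 ∪ (S1 ∪ (S2 ∪ (S3 ∪ (S4 ∪ (Sa ∪ (Sb ∪ S6)))))) := by
      intro p hp
      obtain ⟨hpp, hU, hpt⟩ := hSp p hp
      simp only [hS0, hS1, hS2, hS3, hS4, hSa, hSb, hS6, Finset.mem_union, Finset.mem_filter, hp,
        true_and]
      unfold UCond at hU
      rw [← hξ] at hU
      rcases le_or_gt (p : ℝ) (√t) with h0 | h0
      · exact Or.inl h0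
      by_cases hd : (p : ℤ) ∣ a * b
      · exact Or.inr (Or.inl hd)
      have hda : ¬ (p : ℤ) ∣ a := fun h => hd (h.mul_right b)
      have hdb : ¬ (p : ℤ) ∣ b := fun h => hd (h.mul_left a)
      tauto
    have k0 : (S0.card : ℝ) ≤ 3 ^ ((3 : ℝ) / 2) * E2 := by
      have h1 := card_le_of_le S0 (√t) (Real.sqrt_nonneg t) fun p hp =>
        ⟨(hSp p (Finset.mem_filter.1 hp).1).1, (Finset.mem_filter.1 hp).2⟩
      refine h1.trans ?_
      have h2 : Real.log t ≤ 3 * t ^ ((1 : ℝ) / 3) := by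
        have := Real.log_le_rpow_div ht0.le (show (0 : ℝ) < 1 / 3 by norm_num)
        linarith
      have h3 : Real.log t ^ ((3 : ℝ) / 2) ≤ 3 ^ ((3 : ℝ) / 2) * √t := by
        calc Real.log t ^ ((3 : ℝ) / 2) ≤ (3 * t ^ ((1 : ℝ) / 3)) ^ ((3 : ℝ) / 2) :=
              Real.rpow_le_rpow hL.le h2 (by norm_num)
          _ = 3 ^ ((3 : ℝ) / 2) * √t := by
              rw [Real.mul_rpow (by norm_num) (by positivity), ← Real.rpow_mul ht0.le,
                Real.sqrt_eq_rpow]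
              norm_num
      rw [hE2, ← mul_div_assoc, le_div_iff₀ hL0]
      calc √t * Real.log t ^ ((3 : ℝ) / 2) ≤ √t * (3 ^ ((3 : ℝ) / 2) * √t) := by gcongr
        _ = 3 ^ ((3 : ℝ) / 2) * (√t * √t) := by ring
        _ = _ := by rw [Real.mul_self_sqrt ht0.le]
    have k1 : (S1.card : ℝ) ≤ N * E1 := by
      have h1 := card_le_of_le S1 N hN0 fun p hp => by
        obtain ⟨hp, hd⟩ := Finset.mem_filter.1 hp
        refine ⟨(hSp p hp).1, Nat.cast_le.2 (Nat.le_of_dvd ?_ (Int.natCast_dvd.1 hd))⟩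
        exact Int.natAbs_pos.2 hab
      have h2 : 1 ≤ E1 := by
        rw [hE1, one_le_div (by linarith), ← hexpξ]
        linarith [Real.add_one_le_exp ξ]
      nlinarith
    have k2 : (S2.card : ℝ) ≤ 2 * E1 := by
      have h1 := card_le_of_le S2 ξ (by linarith) fun p hp =>
        ⟨(hSp p (Finset.mem_filter.1 hp).1).1, (Finset.mem_filter.1 hp).2⟩
      refine h1.trans ?_
      rw [hE1, ← mul_div_assoc, le_div_iff₀ (by linarith), ← hexpξ]
      have := Real.quadratic_le_exp_of_nonneg (show 0 ≤ ξ by linarith)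
      nlinarith
    have k3 : (S3.card : ℝ) ≤ C3 * E2 := H3 t ξ ht hξ1 hcase S3 fun p hp => by
      obtain ⟨hp, h1, h2⟩ := Finset.mem_filter.1 hp
      exact ⟨(hSp p hp).1, h1, (hSp p hp).2.2, h2⟩
    have k4 : (S4.card : ℝ) ≤ C4 * E3 := H4 t ξ ht hξ1 S4 fun p hp => by
      obtain ⟨hp, h1, h2⟩ := Finset.mem_filter.1 hp
      exact ⟨(hSp p hp).1, h1, (hSp p hp).2.2, h2⟩
    have ka : (Sa.card : ℝ) ≤ Ca * E2 := Ha t ht Sa fun p hp => by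
      obtain ⟨hp, h1, h2⟩ := Finset.mem_filter.1 hp
      exact ⟨(hSp p hp).1, h1, (hSp p hp).2.2, h2⟩
    have kb : (Sb.card : ℝ) ≤ Cb * E2 := Hb t ht Sb fun p hp => by
      obtain ⟨hp, h1, h2⟩ := Finset.mem_filter.1 hp
      exact ⟨(hSp p hp).1, h1, (hSp p hp).2.2, h2⟩
    have k6 : (S6.card : ℝ) ≤ C6 * E2 := H6 t ht S6 fun p hp => by
      obtain ⟨hp, h1, h2⟩ := Finset.mem_filter.1 hp
      exact ⟨(hSp p hp).1, h1, (hSp p hp).2.2, h2⟩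
    have hle : S.card ≤ S0.card + (S1.card + (S2.card + (S3.card + (S4.card + (Sa.card
        + (Sb.card + S6.card)))))) := by
      refine (Finset.card_le_card hsub).trans ?_
      refine (Finset.card_union_le _ _).trans (Nat.add_le_add_left ?_ _)
      refine (Finset.card_union_le _ _).trans (Nat.add_le_add_left ?_ _)
      refine (Finset.card_union_le _ _).trans (Nat.add_le_add_left ?_ _)
      refine (Finset.card_union_le _ _).trans (Nat.add_le_add_left ?_ _)
      refine (Finset.card_union_le _ _).trans (Nat.add_le_add_left ?_ _)
      refine (Finset.card_union_le _ _).trans (Nat.add_le_add_left ?_ _)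
      exact Finset.card_union_le _ _
    have hle' : (S.card : ℝ) ≤ S0.card + (S1.card + (S2.card + (S3.card + (S4.card + (Sa.card
        + (Sb.card + S6.card)))))) := by exact_mod_cast hle
    set E := E1 + E2 + E3 with hE
    have e1 : E1 ≤ E := by linarith
    have e2 : E2 ≤ E := by linarith
    have e3 : E3 ≤ E := by linarith
    have m0 := mul_le_mul_of_nonneg_left e2 h30
    have m1 := mul_le_mul_of_nonneg_left e1 hN0
    have m3 := mul_le_mul_of_nonneg_left e2 hC3.le
    have m4 := mul_le_mul_of_nonneg_left e3 hC4.le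
    have ma := mul_le_mul_of_nonneg_left e2 hCa.le
    have mb := mul_le_mul_of_nonneg_left e2 hCb.le
    have m6 := mul_le_mul_of_nonneg_left e2 hC6.le
    have hEpos : 0 ≤ E := by linarith
    calc (S.card : ℝ) ≤ 3 ^ ((3 : ℝ) / 2) * E + N * E + 4 * E + C3 * E + C4 * E + Ca * E + Cb * E
          + C6 * E := by linarith
      _ = _ := by ring
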